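/- The infinite series identity 315π/(16√2) = Σ_{k=0}^{∞} (-1/27)^k · [(1/8)_k (1/4)_k (5/8)_k (1)_k] / [(13/12)_k (11/8)_k (17/12)_k (15/8)_k] · (448k³ + 688k² + 305k + 44) holds, where the sum is over natural numbers k and all quantities are real numbers. -/

import Mathlib

noncomputable def risingFactorial (a : ℝ) (k : ℕ) : ℝ := ∏ i ∈ Finset.range k, (a + i)

/-!
The identity is obtained from a WZ pair by summing along the diagonal. Consider the alternating
well-poised series
`∑ (-1)^i (a + 2i) (b)_i (c)_i (d)_i / ((1 + a - b)_i (1 + a - c)_i (1 + a - d)_i)`.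
The shift `(a, b, c, d) ↦ (a + 2, b + 1, c + 1, d)` changes its terms, suitably normalised, by a
telescoping difference. In the resulting array `F m i`, the tails `S n = ∑_{i ≥ n} F n i` tend to
zero, so `S 0 = ∑ (S n - S (n + 1))`, and each difference `S n - S (n + 1)` is a closed form times
`F n n`. At `(a, b, c, d) = (1, 1, 1/4, 3/4)` the row `S 0` is
`3/4 * (1 + 1/3 - 1/5 - 1/7 + ⋯)`, a multiple of `∫₀¹ (1 + x²) / (1 + x⁴) dx = π / (2√2)`, while
the multiplication formula for rising factorials turns the diagonal into the series in question.
-/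

open Filter Topology MeasureTheory

lemma risingFactorial_zero (a : ℝ) : risingFactorial a 0 = 1 := Finset.prod_range_zero _

lemma risingFactorial_succ (a : ℝ) (k : ℕ) :
    risingFactorial a (k + 1) = risingFactorial a k * (a + k) :=
  Finset.prod_range_succ _ _

lemma risingFactorial_pos {a : ℝ} (ha : 0 < a) (k : ℕ) : 0 < risingFactorial a k :=
  Finset.prod_pos fun _ _ => by positivity

lemma risingFactorial_add (a : ℝ) (k l : ℕ) :
    risingFactorial a (k + l) = risingFactorial a k * risingFactorial (a + k) l := by
  simp only [risingFactorial, Finset.prod_range_add, Nat.cast_add, add_assoc]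

lemma mul_risingFactorial_add_one (a : ℝ) (k : ℕ) :
    a * risingFactorial (a + 1) k = (a + k) * risingFactorial a k := by
  have hone : risingFactorial a 1 = a := by simp [risingFactorial]
  have h := risingFactorial_add a 1 k
  rw [add_comm 1 k, risingFactorial_succ, hone, Nat.cast_one] at h
  rw [← h, mul_comm]

lemma risingFactorial_div_add_one {a : ℝ} (ha : 0 < a) (k : ℕ) :
    risingFactorial a k / risingFactorial (a + 1) k = a / (a + k) := by
  have := risingFactorial_pos (add_pos ha one_pos) k
  rw [div_eq_div_iff (by positivity) (by positivity), mul_risingFactorial_add_one, mul_comm]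

lemma risingFactorial_mul {m : ℕ} (hm : m ≠ 0) (a : ℝ) (k : ℕ) :
    risingFactorial a (m * k) =
      (m : ℝ) ^ (m * k) * ∏ r ∈ Finset.range m, risingFactorial ((a + r) / m) k := by
  induction k with
  | zero => simp [risingFactorial_zero]
  | succ k ih =>
    have hblock : risingFactorial (a + (m * k : ℕ)) m =
        (m : ℝ) ^ m * ∏ r ∈ Finset.range m, ((a + r) / m + k) := by
      have hm' : (m : ℝ) ≠ 0 := Nat.cast_ne_zero.2 hm
      rw [← Finset.card_range m, ← Finset.prod_const, Finset.card_range, ← Finset.prod_mul_distrib]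
      refine Finset.prod_congr rfl fun r _ => ?_
      push_cast
      field_simp
      ring
    simp only [mul_add_one, risingFactorial_add, ih, hblock, risingFactorial_succ,
      Finset.prod_mul_distrib, pow_add]
    ring

lemma risingFactorial_two_mul (a : ℝ) (k : ℕ) :
    risingFactorial a (2 * k) =
      2 ^ (2 * k) * (risingFactorial (a / 2) k * risingFactorial ((a + 1) / 2) k) := by
  simp [risingFactorial_mul two_ne_zero, Finset.prod_range_succ]

lemma risingFactorial_three_mul (a : ℝ) (k : ℕ) :
    risingFactorial a (3 * k) = 3 ^ (3 * k) * (risingFactorial (a / 3) k *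
      risingFactorial ((a + 1) / 3) k * risingFactorial ((a + 2) / 3) k) := by
  simp [risingFactorial_mul three_ne_zero, Finset.prod_range_succ]

lemma tendsto_risingFactorial_div_risingFactorial {p q : ℝ} (hp : 0 < p) (hpq : p < q) :
    Tendsto (fun k => risingFactorial p k / risingFactorial q k) atTop (𝓝 0) := by
  rw [← tendsto_add_atTop_iff_nat 1]
  have hΓ : Tendsto (fun n : ℕ => (n : ℝ) ^ (-(q - p)) * (Real.GammaSeq q n / Real.GammaSeq p n))
      atTop (𝓝 0) := by
    simpa using ((tendsto_rpow_neg_atTop (sub_pos.2 hpq)).comp tendsto_natCast_atTop_atTop).mul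
      ((Real.GammaSeq_tendsto_Gamma q).div (Real.GammaSeq_tendsto_Gamma p)
        (Real.Gamma_pos_of_pos hp).ne')
  refine hΓ.congr' ?_
  filter_upwards [eventually_gt_atTop 0] with n hn
  have hn' : (0 : ℝ) < n := by exact_mod_cast hn
  have hfact : (n.factorial : ℝ) ≠ 0 := by positivity
  have hp' := (risingFactorial_pos hp (n + 1)).ne'
  have hq' := (risingFactorial_pos (hp.trans hpq) (n + 1)).ne'
  -- The denominator of `Real.GammaSeq x n` is, definitionally, `risingFactorial x (n + 1)`.
  change (n : ℝ) ^ (-(q - p)) * ((n : ℝ) ^ q * n.factorial / risingFactorial q (n + 1) /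
    ((n : ℝ) ^ p * n.factorial / risingFactorial p (n + 1))) = _
  rw [neg_sub, Real.rpow_sub hn']
  have := (Real.rpow_pos_of_pos hn' q).ne'
  have := (Real.rpow_pos_of_pos hn' p).ne'
  field_simp

lemma exists_tendsto_alternating_series_abs_le_of_antitone {f : ℕ → ℝ} (hf : Antitone f)
    (hf0 : Tendsto f atTop (𝓝 0)) :
    ∃ l, Tendsto (fun n => ∑ i ∈ Finset.range n, (-1) ^ i * f i) atTop (𝓝 l) ∧ |l| ≤ f 0 := by
  obtain ⟨l, hl⟩ := hf.tendsto_alternating_series_of_tendsto_zero hf0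
  have hl0 : 0 ≤ l := by simpa using hf.alternating_series_le_tendsto hl 0
  have hlf : l ≤ f 0 := by simpa using hf.tendsto_le_alternating_series hl 0
  exact ⟨l, hl, (abs_of_nonneg hl0).trans_le hlf⟩

section WZ

variable {E : Type*} [AddCommGroup E] [TopologicalSpace E] [IsTopologicalAddGroup E] [T2Space E]
  {F G : ℕ → ℕ → E} {S : ℕ → E}

lemma sub_succ_eq_of_wz (hFG : ∀ m i, F m i - F (m + 1) i = G m i - G m (i + 1))
    (hG : ∀ m, Tendsto (G m) atTop (𝓝 0))
    (hS : ∀ n, Tendsto (fun J => ∑ j ∈ Finset.range J, F n (n + j)) atTop (𝓝 (S n))) (n : ℕ) :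
    S n - S (n + 1) = F n n + G n (n + 1) := by
  have hpartial (J : ℕ) : ∑ j ∈ Finset.range (J + 1), F n (n + j) -
      ∑ j ∈ Finset.range J, F (n + 1) (n + 1 + j) =
        F n n + (G n (n + 1) - G n (J + (n + 1))) := by
    have htele : ∑ j ∈ Finset.range J, (F n (n + 1 + j) - F (n + 1) (n + 1 + j)) =
        G n (n + 1) - G n (J + (n + 1)) := by
      simp only [hFG, add_comm J]
      exact Finset.sum_range_sub' (fun j => G n (n + 1 + j)) J
    rw [Finset.sum_range_succ', ← htele, Finset.sum_sub_distrib]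
    simp only [add_zero, add_right_comm n, add_assoc]
    abel
  have hlim : Tendsto (fun J => F n n + (G n (n + 1) - G n (J + (n + 1)))) atTop
      (𝓝 (F n n + (G n (n + 1) - 0))) :=
    (((hG n).comp (tendsto_add_atTop_nat (n + 1))).const_sub _).const_add _
  rw [sub_zero] at hlim
  refine tendsto_nhds_unique ?_ hlim
  simp only [← hpartial]
  exact ((hS n).comp (tendsto_add_atTop_nat 1)).sub (hS (n + 1))

lemma tendsto_sum_diagonal_of_wz (hFG : ∀ m i, F m i - F (m + 1) i = G m i - G m (i + 1))
    (hG : ∀ m, Tendsto (G m) atTop (𝓝 0))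
    (hS : ∀ n, Tendsto (fun J => ∑ j ∈ Finset.range J, F n (n + j)) atTop (𝓝 (S n)))
    (hS0 : Tendsto S atTop (𝓝 0)) :
    Tendsto (fun N => ∑ n ∈ Finset.range N, (F n n + G n (n + 1))) atTop (𝓝 (S 0)) := by
  simp only [← sub_succ_eq_of_wz hFG hG hS, Finset.sum_range_sub']
  simpa using hS0.const_sub (S 0)

end WZ

lemma tendsto_sum_neg_one_pow_mul_integral {g : ℝ → ℝ} (hg : IntervalIntegrable g volume 0 1)
    {m : ℕ} (hm : m ≠ 0) :
    Tendsto (fun J => ∑ j ∈ Finset.range J, (-1) ^ j * ∫ x in (0 : ℝ)..1, g x * x ^ (m * j)) atTop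
      (𝓝 (∫ x in (0 : ℝ)..1, g x / (1 + x ^ m))) := by
  have hterm (j : ℕ) : IntervalIntegrable (fun x => g x * (-x ^ m) ^ j) volume 0 1 :=
    hg.mul_continuousOn (by fun_prop)
  have hsum (J : ℕ) : ∑ j ∈ Finset.range J, (-1) ^ j * ∫ x in (0 : ℝ)..1, g x * x ^ (m * j) =
      ∫ x in (0 : ℝ)..1, g x * ∑ j ∈ Finset.range J, (-x ^ m) ^ j := by
    simp only [Finset.mul_sum]
    rw [intervalIntegral.integral_finsetSum fun j _ => hterm j]
    refine Finset.sum_congr rfl fun j _ => ?_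
    rw [← intervalIntegral.integral_const_mul]
    refine intervalIntegral.integral_congr fun x _ => ?_
    simp only [neg_pow (x ^ m), pow_mul]
    ring
  have hgeom (x : ℝ) (hx : 0 < x) (J : ℕ) :
      ∑ j ∈ Finset.range J, (-x ^ m) ^ j = (1 - (-x ^ m) ^ J) / (1 + x ^ m) := by
    have := pow_pos hx m
    rw [geom_sum_eq (by linarith), ← neg_div_neg_eq]
    ring_nf
  simp only [hsum]
  refine intervalIntegral.tendsto_integral_filter_of_dominated_convergence (fun x => |g x| * 2)
    (.of_forall fun J => ?_) (.of_forall fun J => .of_forall fun x hx => ?_)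
    (hg.abs.mul_const 2) ?_
  · exact (hg.mul_continuousOn (by fun_prop)).aestronglyMeasurable_restrict_uIoc
  · rw [Set.uIoc_of_le zero_le_one] at hx
    have hxm := pow_pos hx.1 m
    have hpow : |(-x ^ m) ^ J| ≤ 1 := by
      rw [abs_pow, abs_neg, abs_of_pos hxm]
      exact pow_le_one₀ hxm.le (pow_le_one₀ hx.1.le hx.2)
    rw [norm_mul, hgeom x hx.1, Real.norm_eq_abs, Real.norm_eq_abs, abs_div,
      abs_of_pos (by positivity : 0 < 1 + x ^ m)]
    gcongr
    rw [div_le_iff₀ (by positivity)]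
    linarith [abs_sub 1 ((-x ^ m) ^ J), abs_one (α := ℝ)]
  · filter_upwards [Measure.ae_ne volume 1] with x hx1 hx
    rw [Set.uIoc_of_le zero_le_one] at hx
    have hlt : |-x ^ m| < 1 := by
      rw [abs_neg, abs_of_pos (pow_pos hx.1 m)]
      exact pow_lt_one₀ hx.1.le (hx.2.lt_of_ne hx1) hm
    simp only [hgeom x hx.1, div_eq_mul_inv (g x)]
    have := (tendsto_pow_atTop_nhds_zero_of_abs_lt_one hlt).const_sub 1
    simpa using (this.div_const (1 + x ^ m)).const_mul (g x)

lemma hasDerivAt_arctan_add_arctan_div_sqrt_two (x : ℝ) :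
    HasDerivAt (fun x => (Real.arctan (√2 * x + 1) + Real.arctan (√2 * x - 1)) / √2)
      ((1 + x ^ 2) / (1 + x ^ 4)) x := by
  have hlin : HasDerivAt (fun x => √2 * x) √2 x := by
    simpa using (hasDerivAt_id x).const_mul √2
  refine (((hlin.add_const 1).arctan.add (hlin.sub_const 1).arctan).div_const √2).congr_deriv ?_
  have hsq : √2 ^ 2 = 2 := Real.sq_sqrt (by norm_num)
  have hfactor : (1 + (√2 * x + 1) ^ 2) * (1 + (√2 * x - 1) ^ 2) = 4 * (1 + x ^ 4) := by
    linear_combination x ^ 4 * (√2 ^ 2 + 2) * hsq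
  have hsum : (1 + (√2 * x + 1) ^ 2) + (1 + (√2 * x - 1) ^ 2) = 4 * (1 + x ^ 2) := by
    linear_combination 2 * x ^ 2 * hsq
  rw [← mul_div_mul_left (1 + x ^ 2) _ four_ne_zero, ← hsum, ← hfactor]
  field_simp
  ring

lemma integral_one_add_sq_div_one_add_pow_four :
    ∫ x in (0 : ℝ)..1, (1 + x ^ 2) / (1 + x ^ 4) = Real.pi / (2 * √2) := by
  have hcont : Continuous fun x : ℝ => (1 + x ^ 2) / (1 + x ^ 4) :=
    .div (by fun_prop) (by fun_prop) fun x => by positivity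
  have hinv : √2 - 1 = (√2 + 1)⁻¹ :=
    eq_inv_of_mul_eq_one_left (by linear_combination Real.sq_sqrt (zero_le_two (α := ℝ)))
  rw [intervalIntegral.integral_eq_sub_of_hasDerivAt
    (fun x _ => hasDerivAt_arctan_add_arctan_div_sqrt_two x) (hcont.intervalIntegrable 0 1)]
  simp only [mul_one, mul_zero, zero_add, zero_sub, Real.arctan_neg, add_neg_cancel, zero_div,
    sub_zero, hinv, Real.arctan_inv_of_pos (show 0 < √2 + 1 by positivity)]
  ring

lemma tendsto_sum_neg_one_pow_mul_one_div_add_one_div :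
    Tendsto (fun J => ∑ j ∈ Finset.range J,
      (-1 : ℝ) ^ j * (1 / (4 * (j : ℝ) + 1) + 1 / (4 * (j : ℝ) + 3))) atTop
      (𝓝 (Real.pi / (2 * √2))) := by
  have hmoment (j : ℕ) : ∫ x in (0 : ℝ)..1, (1 + x ^ 2) * x ^ (4 * j) =
      1 / (4 * (j : ℝ) + 1) + 1 / (4 * (j : ℝ) + 3) := by
    simp only [one_add_mul, ← pow_add]
    rw [intervalIntegral.integral_add (by simp) (by simp), integral_pow, integral_pow]
    push_cast
    rw [one_pow, one_pow, zero_pow (by lia), zero_pow (by lia)]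
    ring
  rw [← integral_one_add_sq_div_one_add_pow_four]
  simp only [← hmoment]
  exact tendsto_sum_neg_one_pow_mul_integral
    (Continuous.intervalIntegrable (by fun_prop) 0 1) four_ne_zero

/-- Parameter region in which the alternating well-poised series
`∑ (-1)^i (a + 2i) (b)_i (c)_i (d)_i / ((1 + a - b)_i (1 + a - c)_i (1 + a - d)_i)` has positive
numerators and denominators and terms that are antitone in absolute value. -/
structure IsWellPoisedAdmissible (a b c d : ℝ) : Prop where
  b_pos : 0 < b
  c_pos : 0 < c
  d_pos : 0 < d
  two_mul_b_le : 2 * b ≤ 1 + a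
  two_mul_c_le : 2 * c ≤ a
  two_mul_d_lt : 2 * d < 1 + a

/-- Hypergeometric part of the terms of the alternating well-poised series with parameters
`(a + 2m, b + m, c + m, d)`, normalised so that the rows `m` form a WZ pair. For `m = 0` it is
`(b)_i (c)_i (d)_i / ((1 + a - b)_i (1 + a - c)_i (1 + a - d)_i)`. -/
noncomputable def wellPoisedWeight (a b c d : ℝ) (m i : ℕ) : ℝ :=
  risingFactorial b (m + i) * risingFactorial c (m + i) * risingFactorial d i *
      risingFactorial (1 + a - b - d) m * risingFactorial (1 + a - c - d) m /
    (risingFactorial (1 + a - b) (m + i) * risingFactorial (1 + a - c) (m + i) *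
      risingFactorial (1 + a - d) (2 * m + i))

/-- First component `F m i` of the WZ pair, without its sign `(-1)^i`. -/
noncomputable def wellPoisedTerm (a b c d : ℝ) (m i : ℕ) : ℝ :=
  (a + 2 * (m + i)) * wellPoisedWeight a b c d m i

/-- Second component `G m i` of the WZ pair, without its sign `(-1)^i`. -/
noncomputable def wellPoisedCert (a b c d : ℝ) (m i : ℕ) : ℝ :=
  (a + 2 * (m + i) - (b + (m + i)) * (c + (m + i)) / (1 + a - d + (2 * m + i))) *
    wellPoisedWeight a b c d m i

/-- Bound, uniform in `m` and `i`, for the ratio of `wellPoisedTerm a b c d (m + 1) i` to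
`wellPoisedTerm a b c d m i`. -/
noncomputable def wellPoisedRate (a d : ℝ) : ℝ := (2 + a - d) / (3 + a - d)

lemma wellPoisedWeight_succ_right (a b c d : ℝ) (m i : ℕ) :
    wellPoisedWeight a b c d m (i + 1) = wellPoisedWeight a b c d m i *
      ((b + (m + i)) * (c + (m + i)) * (d + i) /
        ((1 + a - b + (m + i)) * (1 + a - c + (m + i)) * (1 + a - d + (2 * m + i)))) := by
  simp only [wellPoisedWeight, ← add_assoc, risingFactorial_succ]
  push_cast
  rw [div_mul_div_comm]
  ring

lemma wellPoisedWeight_succ_left (a b c d : ℝ) (m i : ℕ) :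
    wellPoisedWeight a b c d (m + 1) i = wellPoisedWeight a b c d m i *
      ((b + (m + i)) * (c + (m + i)) * (1 + a - b - d + m) * (1 + a - c - d + m) /
        ((1 + a - b + (m + i)) * (1 + a - c + (m + i)) *
          ((1 + a - d + (2 * m + i)) * (1 + a - d + (2 * m + i) + 1)))) := by
  simp only [wellPoisedWeight, mul_add_one, add_right_comm _ _ i, risingFactorial_succ]
  push_cast
  rw [div_mul_div_comm]
  ring

lemma wellPoised_wz {a b c d : ℝ} (hb : 0 < 1 + a - b) (hc : 0 < 1 + a - c) (hd : 0 < 1 + a - d)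
    (m i : ℕ) :
    wellPoisedTerm a b c d m i - wellPoisedTerm a b c d (m + 1) i =
      wellPoisedCert a b c d m i + wellPoisedCert a b c d m (i + 1) := by
  simp only [wellPoisedTerm, wellPoisedCert, wellPoisedWeight_succ_left,
    wellPoisedWeight_succ_right]
  have : 0 < 1 + a - b + (m + i) := by positivity
  have : 0 < 1 + a - c + (m + i) := by positivity
  have : 0 < 1 + a - d + (2 * m + i) := by positivity
  push_cast
  rw [← add_assoc (2 * m : ℝ), ← add_assoc (1 + a - d) (2 * m + i : ℝ)]
  field_simp
  ring

namespace IsWellPoisedAdmissible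

variable {a b c d : ℝ} (h : IsWellPoisedAdmissible a b c d)
include h

lemma a_pos : 0 < a := by linarith [h.c_pos, h.two_mul_c_le]

lemma one_add_sub_b_pos : 0 < 1 + a - b := by linarith [h.b_pos, h.two_mul_b_le]

lemma one_add_sub_c_pos : 0 < 1 + a - c := by linarith [h.c_pos, h.two_mul_c_le]

lemma one_add_sub_d_pos : 0 < 1 + a - d := by linarith [h.d_pos, h.two_mul_d_lt]

lemma one_add_sub_b_sub_d_pos : 0 < 1 + a - b - d := by
  linarith [h.two_mul_b_le, h.two_mul_d_lt]

lemma one_add_sub_c_sub_d_pos : 0 < 1 + a - c - d := by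
  linarith [h.two_mul_c_le, h.two_mul_d_lt]

lemma weight_nonneg (m i : ℕ) : 0 ≤ wellPoisedWeight a b c d m i := by
  have hrf {x : ℝ} (hx : 0 < x) (k : ℕ) : 0 ≤ risingFactorial x k := (risingFactorial_pos hx k).le
  have := hrf h.b_pos (m + i)
  have := hrf h.c_pos (m + i)
  have := hrf h.d_pos i
  have := hrf h.one_add_sub_b_sub_d_pos m
  have := hrf h.one_add_sub_c_sub_d_pos m
  have := hrf h.one_add_sub_b_pos (m + i)
  have := hrf h.one_add_sub_c_pos (m + i)
  have := hrf h.one_add_sub_d_pos (2 * m + i)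
  unfold wellPoisedWeight
  positivity

lemma term_nonneg (m i : ℕ) : 0 ≤ wellPoisedTerm a b c d m i := by
  have := h.a_pos
  exact mul_nonneg (by positivity) (h.weight_nonneg m i)

lemma mul_ratio_le {t : ℝ} (ht : 0 ≤ t) :
    (a + 2 * (t + 1)) * ((b + t) * (c + t)) / ((1 + a - b + t) * (1 + a - c + t)) ≤
      a + 2 * t := by
  have hb₀ := h.one_add_sub_b_pos
  have hc₀ := h.one_add_sub_c_pos
  obtain ⟨hb, hc, -, hb', hc', -⟩ := h
  have hbt : b + t ≤ 1 + a - b + t := by linarith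
  have hct : (a + 2 * (t + 1)) * (c + t) ≤ (a + 2 * t) * (1 + a - c + t) := by nlinarith
  rw [div_le_iff₀ (by positivity)]
  calc (a + 2 * (t + 1)) * ((b + t) * (c + t))
      = (b + t) * ((a + 2 * (t + 1)) * (c + t)) := by ring
    _ ≤ (1 + a - b + t) * ((a + 2 * t) * (1 + a - c + t)) := by
      refine mul_le_mul hbt hct ?_ ?_ <;> nlinarith
    _ = _ := by ring

lemma term_succ_right_le_mul (m i : ℕ) :
    wellPoisedTerm a b c d m (i + 1) ≤
      wellPoisedTerm a b c d m i * ((d + i) / (1 + a - d + (2 * m + i))) := by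
  have hw := h.weight_nonneg m i
  have hd := h.d_pos
  have hb₀ := h.one_add_sub_b_pos
  have hc₀ := h.one_add_sub_c_pos
  have hd₀ := h.one_add_sub_d_pos
  have : 0 < 1 + a - b + (m + i) := by positivity
  have : 0 < 1 + a - c + (m + i) := by positivity
  have : 0 < 1 + a - d + (2 * m + i) := by positivity
  calc wellPoisedTerm a b c d m (i + 1)
      = (a + 2 * (m + i + 1)) * ((b + (m + i)) * (c + (m + i))) /
          ((1 + a - b + (m + i)) * (1 + a - c + (m + i))) *
          (wellPoisedWeight a b c d m i * ((d + i) / (1 + a - d + (2 * m + i)))) := by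
        rw [wellPoisedTerm, wellPoisedWeight_succ_right]
        push_cast
        field_simp
        ring
    _ ≤ (a + 2 * (m + i)) *
          (wellPoisedWeight a b c d m i * ((d + i) / (1 + a - d + (2 * m + i)))) := by
        gcongr
        exact h.mul_ratio_le (by positivity)
    _ = _ := by rw [wellPoisedTerm]; ring

lemma rate_nonneg : 0 ≤ wellPoisedRate a d :=
  div_nonneg (by linarith [h.one_add_sub_d_pos]) (by linarith [h.one_add_sub_d_pos])

lemma rate_lt_one : wellPoisedRate a d < 1 :=
  (div_lt_one (by linarith [h.one_add_sub_d_pos])).2 (by linarith)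

lemma shift_factor_le_rate (m i : ℕ) :
    (1 + a - b - d + m) / (1 + a - d + (2 * m + i)) *
      ((1 + a - c - d + m) / (1 + a - d + (2 * m + i) + 1)) ≤ wellPoisedRate a d := by
  have hd₀ := h.one_add_sub_d_pos
  have hcd := h.one_add_sub_c_sub_d_pos
  have hb := h.b_pos
  have hc := h.c_pos
  have : (0 : ℝ) ≤ m := m.cast_nonneg
  have : (0 : ℝ) ≤ i := i.cast_nonneg
  have hfirst : (1 + a - b - d + m) / (1 + a - d + (2 * m + i)) ≤ 1 :=
    (div_le_one (by positivity)).2 (by linarith)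
  have hsecond : (1 + a - c - d + m) / (1 + a - d + (2 * m + i) + 1) ≤ wellPoisedRate a d := by
    rw [wellPoisedRate, div_le_div_iff₀ (by positivity) (by linarith)]
    nlinarith
  simpa only [one_mul] using mul_le_mul hfirst hsecond (by positivity) zero_le_one

lemma term_succ_left_le (m i : ℕ) :
    wellPoisedTerm a b c d (m + 1) i ≤ wellPoisedRate a d * wellPoisedTerm a b c d m i := by
  have hw := h.weight_nonneg m i
  have ha := h.a_pos
  have hbd := h.one_add_sub_b_sub_d_pos
  have hcd := h.one_add_sub_c_sub_d_pos
  have hb₀ := h.one_add_sub_b_pos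
  have hc₀ := h.one_add_sub_c_pos
  have hd₀ := h.one_add_sub_d_pos
  have hb := h.b_pos
  have hc := h.c_pos
  have : 0 < 1 + a - b + (m + i) := by positivity
  have : 0 < 1 + a - c + (m + i) := by positivity
  have : 0 < 1 + a - d + (2 * m + i) := by positivity
  calc wellPoisedTerm a b c d (m + 1) i
      = (a + 2 * (m + i + 1)) * ((b + (m + i)) * (c + (m + i))) /
          ((1 + a - b + (m + i)) * (1 + a - c + (m + i))) * wellPoisedWeight a b c d m i *
          ((1 + a - b - d + m) / (1 + a - d + (2 * m + i)) *
            ((1 + a - c - d + m) / (1 + a - d + (2 * m + i) + 1))) := by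
        rw [wellPoisedTerm, wellPoisedWeight_succ_left]
        push_cast
        field_simp
        ring
    _ ≤ (a + 2 * (m + i)) * wellPoisedWeight a b c d m i * wellPoisedRate a d := by
        gcongr
        · exact h.mul_ratio_le (by positivity)
        · exact h.shift_factor_le_rate m i
    _ = _ := by rw [wellPoisedTerm]; ring

lemma antitone_term (m : ℕ) : Antitone (wellPoisedTerm a b c d m) := by
  refine antitone_nat_of_succ_le fun i => (h.term_succ_right_le_mul m i).trans ?_
  refine mul_le_of_le_one_right (h.term_nonneg m i) ?_
  have := h.two_mul_d_lt
  have := h.d_pos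
  have : (0 : ℝ) ≤ m := m.cast_nonneg
  have : (0 : ℝ) ≤ i := i.cast_nonneg
  exact div_le_one_of_le₀ (by linarith) (by linarith)

lemma term_le_pow_mul (m i : ℕ) :
    wellPoisedTerm a b c d m i ≤ wellPoisedRate a d ^ m * wellPoisedTerm a b c d 0 i := by
  induction m with
  | zero => simp
  | succ m ih =>
    rw [pow_succ', mul_assoc]
    exact (h.term_succ_left_le m i).trans (mul_le_mul_of_nonneg_left ih h.rate_nonneg)

lemma term_zero_left_le (i : ℕ) :
    wellPoisedTerm a b c d 0 i ≤ a * (risingFactorial d i / risingFactorial (1 + a - d) i) := by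
  have := h.two_mul_d_lt
  have := h.d_pos
  induction i with
  | zero => simp [wellPoisedTerm, wellPoisedWeight, risingFactorial_zero]
  | succ i ih =>
    have hratio : 0 ≤ (d + i) / (1 + a - d + i) :=
      div_nonneg (by positivity) (add_nonneg (by linarith) i.cast_nonneg)
    calc wellPoisedTerm a b c d 0 (i + 1)
        ≤ wellPoisedTerm a b c d 0 i * ((d + i) / (1 + a - d + i)) := by
          simpa using h.term_succ_right_le_mul 0 i
      _ ≤ a * (risingFactorial d i / risingFactorial (1 + a - d) i) *
            ((d + i) / (1 + a - d + i)) := mul_le_mul_of_nonneg_right ih hratio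
      _ = _ := by rw [risingFactorial_succ, risingFactorial_succ, mul_assoc, div_mul_div_comm]

lemma tendsto_term (m : ℕ) : Tendsto (wellPoisedTerm a b c d m) atTop (𝓝 0) := by
  have hzero : Tendsto (wellPoisedTerm a b c d 0) atTop (𝓝 0) := by
    refine squeeze_zero (h.term_nonneg 0) h.term_zero_left_le ?_
    simpa using (tendsto_risingFactorial_div_risingFactorial h.d_pos
      (by linarith [h.two_mul_d_lt] : d < 1 + a - d)).const_mul a
  refine squeeze_zero (h.term_nonneg m) (h.term_le_pow_mul m) ?_
  simpa using hzero.const_mul (wellPoisedRate a d ^ m)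

lemma abs_cert_le (m i : ℕ) : |wellPoisedCert a b c d m i| ≤ wellPoisedTerm a b c d m i := by
  have hw := h.weight_nonneg m i
  have ha := h.a_pos
  have hd₀ := h.one_add_sub_d_pos
  obtain ⟨hb, hc, -, hb', hc', hd'⟩ := h
  have hquot : (b + (m + i)) * (c + (m + i)) / (1 + a - d + (2 * m + i)) ≤ a + 2 * (m + i) := by
    have : (0 : ℝ) ≤ m := m.cast_nonneg
    have : (0 : ℝ) ≤ i := i.cast_nonneg
    rw [div_le_iff₀ (by positivity), mul_comm]
    gcongr <;> linarith
  rw [wellPoisedCert, wellPoisedTerm, abs_mul, abs_of_nonneg hw, abs_of_nonneg (by linarith)]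
  gcongr
  exact sub_le_self _ (by positivity)

lemma term_le_rate_pow_mul (m i : ℕ) :
    wellPoisedTerm a b c d m i ≤ wellPoisedRate a d ^ m * a := by
  have hinit : wellPoisedTerm a b c d 0 0 = a := by
    simp [wellPoisedTerm, wellPoisedWeight, risingFactorial_zero]
  refine (h.term_le_pow_mul m i).trans ?_
  refine mul_le_mul_of_nonneg_left ?_ (pow_nonneg h.rate_nonneg m)
  simpa only [hinit] using h.antitone_term 0 i.zero_le

lemma exists_tendsto_sum_row (n : ℕ) : ∃ l,
    Tendsto (fun J => ∑ j ∈ Finset.range J, (-1) ^ (n + j) * wellPoisedTerm a b c d n (n + j))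
      atTop (𝓝 l) ∧ ‖l‖ ≤ wellPoisedRate a d ^ n * a := by
  obtain ⟨l, hl, hle⟩ := exists_tendsto_alternating_series_abs_le_of_antitone
    (f := fun j => wellPoisedTerm a b c d n (n + j))
    (fun i j hij => h.antitone_term n (by lia))
    ((h.tendsto_term n).comp (tendsto_atTop_mono (Nat.le_add_left · n) tendsto_id))
  refine ⟨(-1) ^ n * l, ?_, ?_⟩
  · simpa only [pow_add, mul_assoc, Finset.mul_sum] using hl.const_mul ((-1) ^ n)
  · simpa using hle.trans (h.term_le_rate_pow_mul n n)

lemma summable_diagonal : Summable fun n : ℕ =>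
    (-1) ^ n * (wellPoisedTerm a b c d n n - wellPoisedCert a b c d n (n + 1)) := by
  have hgeom := (summable_geometric_of_lt_one h.rate_nonneg h.rate_lt_one).mul_right (2 * a)
  refine .of_norm_bounded hgeom fun n => ?_
  have hcert := h.abs_cert_le n (n + 1)
  have hn := h.term_le_rate_pow_mul n n
  have hn' := h.term_le_rate_pow_mul n (n + 1)
  rw [norm_mul, norm_pow, norm_neg, norm_one, one_pow, one_mul]
  refine (norm_sub_le _ _).trans ?_
  rw [Real.norm_of_nonneg (h.term_nonneg n n), Real.norm_eq_abs]
  linarith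

theorem hasSum_diagonal {s : ℝ} (hs : Tendsto
      (fun J => ∑ i ∈ Finset.range J, (-1) ^ i * wellPoisedTerm a b c d 0 i) atTop (𝓝 s)) :
    HasSum (fun n => (-1) ^ n * (wellPoisedTerm a b c d n n - wellPoisedCert a b c d n (n + 1)))
      s := by
  choose S hS hS_le using h.exists_tendsto_sum_row
  have hS_zero : S 0 = s := tendsto_nhds_unique (hS 0) (by simpa only [zero_add] using hs)
  have hS_lim : Tendsto S atTop (𝓝 0) := by
    refine squeeze_zero_norm hS_le ?_
    simpa using
      (tendsto_pow_atTop_nhds_zero_of_lt_one h.rate_nonneg h.rate_lt_one).mul_const a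
  have hcert (m : ℕ) : Tendsto (fun i => (-1) ^ i * wellPoisedCert a b c d m i) atTop (𝓝 0) :=
    squeeze_zero_norm (fun i => by simpa using h.abs_cert_le m i) (h.tendsto_term m)
  have hwz (m i : ℕ) : (-1) ^ i * wellPoisedTerm a b c d m i -
      (-1) ^ i * wellPoisedTerm a b c d (m + 1) i = (-1) ^ i * wellPoisedCert a b c d m i -
        (-1) ^ (i + 1) * wellPoisedCert a b c d m (i + 1) := by
    rw [← mul_sub, wellPoised_wz h.one_add_sub_b_pos h.one_add_sub_c_pos h.one_add_sub_d_pos]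
    ring
  rw [h.summable_diagonal.hasSum_iff_tendsto_nat, ← hS_zero]
  refine (tendsto_sum_diagonal_of_wz hwz hcert hS hS_lim).congr fun N =>
    Finset.sum_congr rfl fun n _ => ?_
  ring

end IsWellPoisedAdmissible

lemma isWellPoisedAdmissible_one_one : IsWellPoisedAdmissible 1 1 (1 / 4) (3 / 4) := by
  constructor <;> norm_num

lemma wellPoisedTerm_zero_left_one_one (i : ℕ) :
    wellPoisedTerm 1 1 (1 / 4) (3 / 4) 0 i =
      3 / 4 * (1 / (4 * (i : ℝ) + 1) + 1 / (4 * (i : ℝ) + 3)) := by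
  have hone := (risingFactorial_pos one_pos i).ne'
  calc wellPoisedTerm 1 1 (1 / 4) (3 / 4) 0 i
      = (1 + 2 * i) * (risingFactorial (1 / 4) i / risingFactorial (1 / 4 + 1) i) *
          (risingFactorial (3 / 4) i / risingFactorial (3 / 4 + 1) i) := by
        norm_num [wellPoisedTerm, wellPoisedWeight, risingFactorial_zero]
        field_simp
    _ = _ := by
        rw [risingFactorial_div_add_one (by norm_num), risingFactorial_div_add_one (by norm_num)]
        field_simp
        ring

lemma wellPoisedWeight_diagonal_one_one_eq_two_mul_three_mul (n : ℕ) :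
    wellPoisedWeight 1 1 (1 / 4) (3 / 4) n n =
      risingFactorial (1 / 4) (2 * n) * risingFactorial (3 / 4) n * risingFactorial (1 / 4) n *
          risingFactorial 1 n /
        (risingFactorial (7 / 4) (2 * n) * risingFactorial (5 / 4) (3 * n)) := by
  have hone := (risingFactorial_pos one_pos (2 * n)).ne'
  norm_num [wellPoisedWeight, ← two_mul, ← add_one_mul]
  field_simp

lemma wellPoisedWeight_diagonal_one_one (n : ℕ) :
    wellPoisedWeight 1 1 (1 / 4) (3 / 4) n n =
      (1 / 27) ^ n * (risingFactorial (1 / 8) n * risingFactorial (1 / 4) n *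
          risingFactorial (5 / 8) n * risingFactorial 1 n) /
        (risingFactorial (13 / 12) n * risingFactorial (11 / 8) n *
          risingFactorial (17 / 12) n * risingFactorial (15 / 8) n) *
        (96 / 35 * (n + 7 / 8) * (n + 5 / 12)) := by
  have hquarter : risingFactorial (1 / 4) (2 * n) =
      2 ^ (2 * n) * (risingFactorial (1 / 8) n * risingFactorial (5 / 8) n) := by
    norm_num [risingFactorial_two_mul]
  have hseven : risingFactorial (7 / 4) (2 * n) =
      2 ^ (2 * n) * (risingFactorial (7 / 8) n * risingFactorial (11 / 8) n) := by
    norm_num [risingFactorial_two_mul]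
  have hfive : risingFactorial (5 / 4) (3 * n) = 27 ^ n *
      (risingFactorial (5 / 12) n * risingFactorial (3 / 4) n * risingFactorial (13 / 12) n) := by
    norm_num [risingFactorial_three_mul, pow_mul]
  have hfifteen : risingFactorial (15 / 8) n = 8 / 7 * (n + 7 / 8) * risingFactorial (7 / 8) n := by
    have h := mul_risingFactorial_add_one (7 / 8) n
    norm_num at h
    linarith
  have hseventeen :
      risingFactorial (17 / 12) n = 12 / 5 * (n + 5 / 12) * risingFactorial (5 / 12) n := by
    have h := mul_risingFactorial_add_one (5 / 12) n
    norm_num at h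
    linarith
  have := (risingFactorial_pos (show (0 : ℝ) < 3 / 4 by norm_num) n).ne'
  rw [wellPoisedWeight_diagonal_one_one_eq_two_mul_three_mul, hquarter, hseven, hfive, hfifteen,
    hseventeen, one_div_pow]
  field_simp
  ring

lemma summand_eq_wellPoised_diagonal (n : ℕ) :
    (-1 / 27) ^ n * (risingFactorial (1 / 8) n * risingFactorial (1 / 4) n *
          risingFactorial (5 / 8) n * risingFactorial 1 n) /
        (risingFactorial (13 / 12) n * risingFactorial (11 / 8) n *
          risingFactorial (17 / 12) n * risingFactorial (15 / 8) n) *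
        (448 * (n : ℝ) ^ 3 + 688 * (n : ℝ) ^ 2 + 305 * n + 44) =
      105 / 2 * ((-1) ^ n * (wellPoisedTerm 1 1 (1 / 4) (3 / 4) n n -
        wellPoisedCert 1 1 (1 / 4) (3 / 4) n (n + 1))) := by
  rw [wellPoisedTerm, wellPoisedCert, wellPoisedWeight_succ_right,
    wellPoisedWeight_diagonal_one_one, neg_div, neg_pow]
  push_cast
  field_simp
  ring

theorem stmt_11 :
    315 * Real.pi / (16 * Real.sqrt 2) =
      ∑' k : ℕ, (-1/27 : ℝ) ^ k * (risingFactorial (1/8) k * risingFactorial (1/4) k * risingFactorial (5/8) k * risingFactorial (1) k) /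
        (risingFactorial (13/12) k * risingFactorial (11/8) k * risingFactorial (17/12) k * risingFactorial (15/8) k) * (448 * (k:ℝ)^3 + 688 * (k:ℝ)^2 + 305 * (k:ℝ) + 44) := by
  have hlim : Tendsto
      (fun J => ∑ i ∈ Finset.range J, (-1) ^ i * wellPoisedTerm 1 1 (1 / 4) (3 / 4) 0 i) atTop
      (𝓝 (3 / 4 * (Real.pi / (2 * √2)))) := by
    simp only [wellPoisedTerm_zero_left_one_one, mul_left_comm _ (3 / 4 : ℝ), ← Finset.mul_sum]
    exact tendsto_sum_neg_one_pow_mul_one_div_add_one_div.const_mul _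
  have hsum := (isWellPoisedAdmissible_one_one.hasSum_diagonal hlim).mul_left (105 / 2)
  simp only [summand_eq_wellPoised_diagonal, hsum.tsum_eq]
  ring
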